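/- Let l ≥ 1 and let P = {P_0,…,P_{l−1}} be a partition of ω into infinite sets with min P_i < min P_j whenever i < j. Then a subset 𝓧 ⊆ 𝓔^P_∞ has the property of Baire with respect to the Ellentuck topology if and only if 𝓧 is Ramsey; moreover, 𝓧 is Ellentuck-meagre if and only if 𝓧 is Ramsey null. (That is, (𝓔^P_∞, ≤, r) is a topological Ramsey space.) -/

import Mathlib

open Set

namespace DualRamsey

/-- `F` is a coarsening of `E` (written `F ≤ E` in the paper): every class of `F`
is a union of classes of `E`. -/
def Coarsens {X : Type*} (F E : Setoid X) : Prop := ∀ a b, E.r a b → F.r a b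

/-- The set of equivalence classes of a setoid. -/
def classes {X : Type*} (E : Setoid X) : Set (Set X) := {C | ∃ x, C = {y | E.r x y}}

/-- The set of minimal representatives of the classes of an equivalence relation on ℕ. -/
def minReps (E : Setoid ℕ) : Set ℕ := {n | ∀ m, E.r n m → n ≤ m}

/-- `pRep E k` is `p_k(E)`, the k-th minimal representative in increasing order. -/
noncomputable def pRep (E : Setoid ℕ) (k : ℕ) : ℕ := Nat.nth (· ∈ minReps E) k

/-- `approx n E` is the n-th approximation `r_n(E)`: `E` restricted to `{0,…,p_n(E)-1}`,
identified with its graph. -/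
noncomputable def approx (n : ℕ) (E : Setoid ℕ) : Set (ℕ × ℕ) :=
  {q | q.1 < pRep E n ∧ q.2 < pRep E n ∧ E.r q.1 q.2}

/-- Basic set `[a, E]` relative to a space `S` of equivalence relations. -/
noncomputable def basicSet (S : Set (Setoid ℕ)) (a : Set (ℕ × ℕ)) (E : ↥S) : Set ↥S :=
  {F | Coarsens F.1 E.1 ∧ ∃ n, approx n F.1 = a}

/-- The Ellentuck topology on a space `S` of equivalence relations. -/
noncomputable def ellentuckTop (S : Set (Setoid ℕ)) : TopologicalSpace ↥S :=
  TopologicalSpace.generateFrom {U | ∃ a E, U = basicSet S a E}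

def IsRamsey (S : Set (Setoid ℕ)) (X : Set ↥S) : Prop :=
  ∀ (a : Set (ℕ × ℕ)) (B : ↥S), (basicSet S a B).Nonempty →
    ∃ A ∈ basicSet S a B, basicSet S a A ⊆ X ∨ basicSet S a A ∩ X = ∅

def IsRamseyNull (S : Set (Setoid ℕ)) (X : Set ↥S) : Prop :=
  ∀ (a : Set (ℕ × ℕ)) (B : ↥S), (basicSet S a B).Nonempty →
    ∃ A ∈ basicSet S a B, basicSet S a A ∩ X = ∅

/-- The property of Baire with respect to the Ellentuck topology. -/
noncomputable def HasBP (S : Set (Setoid ℕ)) (X : Set ↥S) : Prop :=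
  ∃ O M : Set ↥S, (ellentuckTop S).IsOpen O ∧ @IsMeagre _ (ellentuckTop S) M ∧
    X = (O \ M) ∪ (M \ O)

/-- The Souslin operation applied to a scheme indexed by finite sequences of naturals. -/
def souslinOp {X : Type*} (A : List ℕ → Set X) : Set X :=
  ⋃ x : ℕ → ℕ, ⋂ n : ℕ, A ((List.range n).map x)

/-- `Y` belongs to the smallest field of sets containing all `t`-open sets and
closed under the Souslin operation. -/
def SouslinMeasurable {X : Type*} (t : TopologicalSpace X) (Y : Set X) : Prop :=
  ∀ 𝒜 : Set (Set X),
    (∀ U, t.IsOpen U → U ∈ 𝒜) →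
    (∀ A ∈ 𝒜, Aᶜ ∈ 𝒜) →
    (∀ A ∈ 𝒜, ∀ B ∈ 𝒜, A ∪ B ∈ 𝒜) →
    (∀ f : List ℕ → Set X, (∀ s, f s ∈ 𝒜) → souslinOp f ∈ 𝒜) →
    Y ∈ 𝒜

/-- The graph of an equivalence relation as a boolean-valued function. -/
noncomputable def graphMap {X : Type*} (E : Setoid X) : X × X → Bool :=
  fun q => @decide (E.r q.1 q.2) (Classical.dec _)

/-- The metrizable topology on a space of equivalence relations, as a subspace of
`2^(X × X)` via graphs. -/
noncomputable def graphTop {X : Type*} (S : Set (Setoid X)) : TopologicalSpace ↥S :=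
  TopologicalSpace.induced (fun E => graphMap E.1) inferInstance



/-- `𝓔^P_∞` for a partition `P` of ℕ into `l` infinite pieces: the `P`-alternating
equivalence relations, i.e. those with infinitely many classes whose k-th minimal
representative lies in `P (k mod l)`. -/
noncomputable def EPalt (l : ℕ) (hl : 0 < l) (P : Fin l → Set ℕ) : Set (Setoid ℕ) :=
  {E | (classes E).Infinite ∧ ∀ k : ℕ, pRep E k ∈ P ⟨k % l, Nat.mod_lt k hl⟩}

/-!
Enumerating the classes of a `P`-alternating equivalence relation `E` by their minimal
representatives, one obtains every coarsening of `E` by applying to the indices of the classes a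
rigid surjection of `ℕ` that preserves residues modulo `l`. Such surjections form a monoid, and
`[r_n(E), E]` is the orbit of `E` under the submonoid of those that fix `0, …, n`. Everything is
then read off the monoid. The approximations of `f • E` correspond to the truncations of `f`, and
as infinitely many factors fixing longer and longer initial segments can be multiplied, dense
invariant requirements can be met simultaneously (fusion). The one-step approximations of
coarsenings are words over a finite alphabet, so the pigeonhole principle is the Carlson–Simpson
theorem, for which an idempotent ultrafilter on words with a variable is used. Fusion and pigeonhole
suffice for Ellentuck's argument with accepting and rejecting neighbourhoods.
-/

/-! ### Ellentuck spaces -/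

section Ellentuck

variable {S : Type*} {B : ℕ → S → Set S} {n : ℕ} {s t : S} {X Y O : Set S}

/-- The Ramsey property of a set, relative to the neighbourhoods `B n s = [r_n(s), s]`. -/
def RamseyFor (B : ℕ → S → Set S) (X : Set S) : Prop :=
  ∀ n s, ∃ t ∈ B n s, B n t ⊆ X ∨ Disjoint (B n t) X

/-- The Ramsey null sets, relative to the neighbourhoods `B n s = [r_n(s), s]`. -/
def RamseyNullFor (B : ℕ → S → Set S) (X : Set S) : Prop :=
  ∀ n s, ∃ t ∈ B n s, Disjoint (B n t) X

/-- The points that accept `O` at depth `n`, in the sense of Galvin and Prikry. -/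
def accepting (B : ℕ → S → Set S) (O : Set S) (n : ℕ) : Set S := {s | B n s ⊆ O}

/-- The points that reject `O` at depth `n`, in the sense of Galvin and Prikry. -/
def rejecting (B : ℕ → S → Set S) (O : Set S) (n : ℕ) : Set S :=
  {s | Disjoint (B n s) (accepting B O n)}

theorem RamseyNullFor.mono (hY : RamseyNullFor B Y) (hXY : X ⊆ Y) : RamseyNullFor B X :=
  fun n s => (hY n s).imp fun _ ⟨hts, ht⟩ => ⟨hts, ht.mono_right hXY⟩

variable [TopologicalSpace S]

/-- Abstract form of the axioms of a topological Ramsey space, in terms of the neighbourhoods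
`B n s = [r_n(s), s]` alone: the pigeonhole principle concerns sets of points which only depend
on their `(n + 1)`-st approximation, and `fusion` is the amalgamation argument that handles
hereditary dense requirements at all depths `n ≥ N` simultaneously. -/
structure IsEllentuck (B : ℕ → S → Set S) : Prop where
  mem_self : ∀ n s, s ∈ B n s
  subset_of_mem : ∀ {n s t}, t ∈ B n s → B n t ⊆ B n s
  antitone : Antitone B
  isOpen_iff : ∀ U, IsOpen U ↔ ∀ s ∈ U, ∃ n, B n s ⊆ U
  pigeonhole : ∀ n s O, (∀ t ∈ B n s, ∀ u ∈ B (n + 1) t, (u ∈ O ↔ t ∈ O)) →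
    ∃ t ∈ B n s, B n t ⊆ O ∨ Disjoint (B n t) O
  fusion : ∀ Q : ℕ → Set S, (∀ n, ∀ s ∈ Q n, B n s ⊆ Q n) → (∀ n s, ∃ t ∈ B n s, t ∈ Q n) →
    ∀ N s, ∃ t ∈ B N s, ∀ n ≥ N, B N t ⊆ Q n

namespace IsEllentuck

theorem isOpen (hB : IsEllentuck B) (n : ℕ) (s : S) : IsOpen (B n s) :=
  (hB.isOpen_iff _).2 fun _ ht => ⟨n, hB.subset_of_mem ht⟩

theorem subset_accepting (hB : IsEllentuck B) (hs : s ∈ accepting B O n) :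
    B n s ⊆ accepting B O n :=
  fun _ ht => (hB.subset_of_mem ht).trans hs

theorem subset_rejecting (hB : IsEllentuck B) (hs : s ∈ rejecting B O n) :
    B n s ⊆ rejecting B O n :=
  fun _ ht => Disjoint.mono_left (hB.subset_of_mem ht) hs

theorem notMem_accepting (hB : IsEllentuck B) (hs : s ∈ rejecting B O n) :
    s ∉ accepting B O n :=
  disjoint_left.1 hs (hB.mem_self n s)

theorem exists_forall_accepting_or_rejecting (hB : IsEllentuck B) (O : Set S) (N : ℕ) (s : S) :
    ∃ t ∈ B N s, ∀ n ≥ N, B N t ⊆ accepting B O n ∪ rejecting B O n := by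
  refine hB.fusion _ ?_ (fun n s => ?_) N s
  · rintro n s (hs | hs)
    · exact (hB.subset_accepting hs).trans subset_union_left
    · exact (hB.subset_rejecting hs).trans subset_union_right
  · by_cases hs : s ∈ rejecting B O n
    · exact ⟨s, hB.mem_self n s, Or.inr hs⟩
    · obtain ⟨t, hts, ht⟩ := not_disjoint_iff.1 hs
      exact ⟨t, hts, Or.inl ht⟩

theorem exists_accepting_or_subset_rejecting_succ (hB : IsEllentuck B) (O : Set S) (n : ℕ)
    (s : S) : ∃ t ∈ B n s, t ∈ accepting B O n ∨ B n t ⊆ rejecting B O (n + 1) := by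
  obtain ⟨t, hts, ht⟩ := hB.exists_forall_accepting_or_rejecting O n s
  rcases ht n le_rfl (hB.mem_self n t) with hacc | hrej
  · exact ⟨t, hts, Or.inl hacc⟩
  have decided := ht (n + 1) n.le_succ
  obtain ⟨u, hut, hu | hu⟩ := hB.pigeonhole n t (accepting B O (n + 1)) fun v hv w hw =>
    ⟨fun hw' => (decided hv).resolve_right fun hv' => disjoint_left.1 hv' hw hw',
      fun hv' => hB.subset_accepting hv' hw⟩
  · have hacc : u ∈ accepting B O n := fun v hv => hu hv (hB.mem_self _ v)
    exact absurd hacc (disjoint_left.1 hrej hut)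
  · exact ⟨u, hB.subset_of_mem hts hut, Or.inr fun v hv =>
      (decided (hB.subset_of_mem hut hv)).resolve_left (disjoint_left.1 hu hv)⟩

theorem exists_accepting_or_forall_subset_rejecting (hB : IsEllentuck B) (O : Set S) (N : ℕ)
    (s : S) : ∃ t ∈ B N s, t ∈ accepting B O N ∨ ∀ n > N, B N t ⊆ rejecting B O n := by
  obtain ⟨t, hts, ht⟩ :=
    hB.fusion (fun n => accepting B O n ∪ {s | B n s ⊆ rejecting B O (n + 1)})
      (by
        rintro n s (hs | hs)
        · exact (hB.subset_accepting hs).trans subset_union_left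
        · exact fun t ht => Or.inr ((hB.subset_of_mem ht).trans hs))
      (fun n s => hB.exists_accepting_or_subset_rejecting_succ O n s) N s
  refine ⟨t, hts, (ht N le_rfl (hB.mem_self N t)).imp_right fun hrej n hn => ?_⟩
  induction n, hn using Nat.le_induction with
  | base => exact hrej
  | succ n hn ih =>
    intro u hu
    have hrej' := (ht n (by omega) hu).resolve_left (hB.notMem_accepting (ih hu))
    exact hrej' (hB.mem_self n u)

theorem ramseyFor_of_isOpen (hB : IsEllentuck B) (hO : IsOpen O) : RamseyFor B O := by
  intro N s
  obtain ⟨t, hts, hacc | hrej⟩ := hB.exists_accepting_or_forall_subset_rejecting O N s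
  · exact ⟨t, hts, Or.inl hacc⟩
  refine ⟨t, hts, Or.inr (disjoint_left.2 fun u hu huO => ?_)⟩
  obtain ⟨m, hm⟩ := (hB.isOpen_iff O).1 hO u huO
  have hacc : u ∈ accepting B O (max m (N + 1)) := (hB.antitone (le_max_left _ _) u).trans hm
  exact hB.notMem_accepting (hrej _ (by omega) hu) hacc

theorem ramseyNullFor_union (hB : IsEllentuck B) (hX : RamseyNullFor B X)
    (hY : RamseyNullFor B Y) : RamseyNullFor B (X ∪ Y) := by
  intro n s
  obtain ⟨t, hts, ht⟩ := hX n s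
  obtain ⟨u, hut, hu⟩ := hY n t
  exact ⟨u, hB.subset_of_mem hts hut,
    disjoint_union_right.2 ⟨ht.mono_left (hB.subset_of_mem hut), hu⟩⟩

theorem ramseyNullFor_biUnion_lt (hB : IsEllentuck B) {X : ℕ → Set S}
    (hX : ∀ i, RamseyNullFor B (X i)) (m : ℕ) : RamseyNullFor B (⋃ i < m, X i) := by
  induction m with
  | zero => exact fun n s => ⟨s, hB.mem_self n s, by simp⟩
  | succ m ih =>
    rw [biUnion_lt_succ]
    exact hB.ramseyNullFor_union ih (hX m)

theorem ramseyNullFor_iUnion (hB : IsEllentuck B) {X : ℕ → Set S}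
    (hX : ∀ i, RamseyNullFor B (X i)) : RamseyNullFor B (⋃ i, X i) := by
  intro N s
  obtain ⟨t, hts, ht⟩ := hB.fusion (fun n => {s | Disjoint (B n s) (⋃ i < n, X i)})
    (fun n s hs t ht => Disjoint.mono_left (hB.subset_of_mem ht) hs)
    (fun n => hB.ramseyNullFor_biUnion_lt hX n n) N s
  refine ⟨t, hts, disjoint_iUnion_right.2 fun i => disjoint_left.2 fun u hu hui => ?_⟩
  exact disjoint_left.1 (ht (max N (i + 1)) (le_max_left _ _) hu) (hB.mem_self _ u)
    (mem_biUnion (lt_of_lt_of_le i.lt_succ_self (le_max_right _ _)) hui)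

theorem ramseyNullFor_of_isNowhereDense (hB : IsEllentuck B) (hX : IsNowhereDense X) :
    RamseyNullFor B X := by
  intro n s
  obtain ⟨t, hts, ht | ht⟩ := hB.ramseyFor_of_isOpen isClosed_closure.isOpen_compl n s
  · exact ⟨t, hts, (disjoint_left.2 fun u hu huX => ht hu (subset_closure huX))⟩
  · have hsub : B n t ⊆ interior (closure X) :=
      interior_maximal (disjoint_compl_right_iff_subset.1 ht) (hB.isOpen n t)
    rw [hX] at hsub
    exact absurd (hsub (hB.mem_self n t)) (notMem_empty t)

theorem isNowhereDense_of_ramseyNullFor (hB : IsEllentuck B) (hX : RamseyNullFor B X) :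
    IsNowhereDense X := by
  refine eq_empty_of_forall_notMem fun s hs => ?_
  obtain ⟨n, hn⟩ := (hB.isOpen_iff _).1 isOpen_interior s hs
  obtain ⟨t, hts, ht⟩ := hX n s
  obtain ⟨u, hut, huX⟩ :=
    mem_closure_iff.1 (interior_subset (hn hts)) _ (hB.isOpen n t) (hB.mem_self n t)
  exact disjoint_left.1 ht hut huX

theorem isMeagre_iff (hB : IsEllentuck B) : IsMeagre X ↔ RamseyNullFor B X := by
  refine ⟨fun hX => ?_, fun hX => (hB.isNowhereDense_of_ramseyNullFor hX).isMeagre⟩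
  obtain ⟨𝒩, hnd, hcount, hsub⟩ := isMeagre_iff_countable_union_isNowhereDense.1 hX
  obtain ⟨N, hN⟩ := (hcount.insert ∅).exists_eq_range (insert_nonempty _ _)
  have hnull : RamseyNullFor B (⋃ i, N i) := hB.ramseyNullFor_iUnion fun i =>
    hB.ramseyNullFor_of_isNowhereDense <| by
      rcases hN.symm ▸ mem_range_self i with hi | hi
      · exact hi ▸ isNowhereDense_empty
      · exact hnd _ hi
  have hcover : X ⊆ ⋃ i, N i := by
    rw [← sUnion_range, ← hN]
    exact hsub.trans (sUnion_mono (subset_insert _ _))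
  exact hnull.mono hcover

theorem ramseyNullFor_diff_interior (hB : IsEllentuck B) (hX : RamseyFor B X) :
    RamseyNullFor B (X \ interior X) := by
  intro n s
  obtain ⟨t, hts, ht | ht⟩ := hX n s
  · have hint : B n t ⊆ interior X := interior_maximal ht (hB.isOpen n t)
    exact ⟨t, hts, disjoint_sdiff_right.mono_left hint⟩
  · exact ⟨t, hts, ht.mono_right sdiff_subset⟩

open scoped symmDiff

theorem exists_eq_symmDiff_iff (hB : IsEllentuck B) :
    (∃ O M, IsOpen O ∧ IsMeagre M ∧ X = O ∆ M) ↔ RamseyFor B X := by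
  constructor
  · rintro ⟨O, M, hO, hM, rfl⟩ n s
    obtain ⟨t, hts, ht⟩ := hB.ramseyFor_of_isOpen hO n s
    obtain ⟨u, hut, hu⟩ := hB.isMeagre_iff.1 hM n t
    have hsub := hB.subset_of_mem hut
    refine ⟨u, hB.subset_of_mem hts hut, ht.imp (fun ht v hv => ?_) fun ht => ?_⟩
    · exact Or.inl ⟨ht (hsub hv), disjoint_left.1 hu hv⟩
    · exact (disjoint_union_right.2 ⟨ht.mono_left hsub, hu⟩).mono_right symmDiff_le_sup
  · intro hX
    refine ⟨interior X, X \ interior X, isOpen_interior,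
      hB.isMeagre_iff.2 (hB.ramseyNullFor_diff_interior hX), ?_⟩
    rw [symmDiff_sdiff_eq_sup, sup_eq_right.2 interior_subset]

end IsEllentuck

end Ellentuck

/-! ### The Carlson–Simpson theorem -/

section CompactSemigroup

variable {T : Type*} [Semigroup T] [TopologicalSpace T]

/-- Nonempty closed left ideals of a topological semigroup; the minimal ones among them are the
source of idempotents. -/
structure IsClosedLeftIdeal (L : Set T) : Prop where
  isClosed : IsClosed L
  nonempty : L.Nonempty
  mul_mem : ∀ t, ∀ a ∈ L, t * a ∈ L

variable [CompactSpace T]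

variable (T) in
theorem exists_minimal_isClosedLeftIdeal [Nonempty T] :
    ∃ L : Set T, Minimal IsClosedLeftIdeal L := by
  refine zorn_superset {L : Set T | IsClosedLeftIdeal L} fun c hc hchain => ?_
  rcases c.eq_empty_or_nonempty with rfl | hne
  · exact ⟨univ, ⟨isClosed_univ, univ_nonempty, fun _ _ _ => mem_univ _⟩, by simp⟩
  have : Nonempty c := hne.to_subtype
  refine ⟨⋂₀ c, ⟨isClosed_sInter fun L hL => (hc hL).isClosed, ?_,
    fun t a ha L hL => (hc hL).mul_mem t a (ha L hL)⟩, fun L => sInter_subset_of_mem⟩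
  exact IsCompact.nonempty_sInter_of_directed_nonempty_isCompact_isClosed
    (IsChain.directedOn (r := fun L M : Set T => L ⊇ M) hchain.symm)
    (fun L hL => (hc hL).nonempty) (fun L hL => (hc hL).isClosed.isCompact)
    (fun L hL => (hc hL).isClosed)

variable [T2Space T]

theorem exists_mul_eq_of_minimal (hmul : ∀ r : T, Continuous (· * r)) {L : Set T}
    (hL : Minimal IsClosedLeftIdeal L) {a b : T} (ha : a ∈ L) (hb : b ∈ L) :
    ∃ t, t * a = b := by
  have hideal : IsClosedLeftIdeal (range (· * a)) :=
    ⟨(isCompact_range (hmul a)).isClosed, ⟨a * a, mem_range_self a⟩,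
      fun s => forall_mem_range.2 fun t => ⟨s * t, mul_assoc s t a⟩⟩
  exact hL.le_of_le hideal (range_subset_iff.2 fun t => hL.prop.mul_mem t a ha) hb

theorem exists_forall_map_mul_map_eq {T' ι : Type*} [Semigroup T'] [TopologicalSpace T']
    [CompactSpace T'] [T2Space T'] [Nonempty T'] (hmul : ∀ r : T, Continuous (· * r))
    (hmul' : ∀ r : T', Continuous (· * r)) (f : ι → T →ₙ* T') (σ : T' → T)
    (hσ : ∀ i x, f i (σ x) = x) {V : Set T} (hV : IsClosed V) (hne : V.Nonempty)
    (hideal : ∀ v ∈ V, ∀ t, v * t ∈ V) :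
    ∃ v ∈ V, ∀ i j, f i v * f j v = f i v := by
  obtain ⟨L, hL⟩ := exists_minimal_isClosedLeftIdeal T'
  obtain ⟨p, hp⟩ := hL.prop.nonempty
  obtain ⟨_, ⟨v, hv, rfl⟩, hidem⟩ := exists_idempotent_in_compact_subsemigroup hmul
    ((· * σ p) '' V) (hne.image _) (hV.isCompact.image (hmul _))
    (by
      rintro _ ⟨x, hx, rfl⟩ _ ⟨y, -, rfl⟩
      exact ⟨x * σ p * y, mul_assoc x (σ p) y ▸ hideal x hx _, mul_assoc _ _ _⟩)
  have hmem : ∀ i, f i (v * σ p) ∈ L := fun i => by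
    rw [map_mul, hσ]
    exact hL.prop.mul_mem _ p hp
  refine ⟨v * σ p, hideal v hv _, fun i j => ?_⟩
  obtain ⟨t, ht⟩ := exists_mul_eq_of_minimal hmul' hL (hmem j) (hmem i)
  rw [← ht, mul_assoc, ← map_mul, hidem]

end CompactSemigroup

section CarlsonSimpson

attribute [local instance] Ultrafilter.mul Ultrafilter.semigroup

theorem ultrafilter_map_mul {M N : Type*} [Mul M] [Mul N] (f : M →ₙ* N) (u v : Ultrafilter M) :
    (u * v).map f = u.map f * v.map f := by
  refine Ultrafilter.coe_injective (Filter.ext fun s => ?_)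
  have hdom := Ultrafilter.eventually_mul u v (f · ∈ s)
  simp only [map_mul] at hdom
  exact hdom.trans (Ultrafilter.eventually_mul (u.map f) (v.map f) (· ∈ s)).symm

variable {Λ : Type*}

/-- Substitution of the letter `a` for the variable `none` of a one-variable word. -/
def substLetter (a : Λ) : FreeMonoid (Option Λ) →* FreeMonoid Λ :=
  FreeMonoid.map fun o => o.getD a

/-- Evaluation of a word with variables indexed by `ℕ` at the letters `a`. -/
def evalWord (a : ℕ → Λ) : FreeMonoid (Λ ⊕ ℕ) →* FreeMonoid Λ :=
  FreeMonoid.map (Sum.elim id a)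

/-- The one-variable word `v`, with `k` as name of its variable. -/
def nameVariable (k : ℕ) : FreeMonoid (Option Λ) →* FreeMonoid (Λ ⊕ ℕ) :=
  FreeMonoid.map fun o => o.elim (Sum.inr k) Sum.inl

theorem evalWord_nameVariable (a : ℕ → Λ) (k : ℕ) (v : FreeMonoid (Option Λ)) :
    evalWord a (nameVariable k v) = substLetter (a k) v := by
  rw [evalWord, nameVariable, FreeMonoid.map_map, substLetter]
  congr 2
  funext o
  cases o <;> rfl

theorem substLetter_map_some (a : Λ) (w : FreeMonoid Λ) :
    substLetter a (FreeMonoid.map some w) = w := by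
  rw [substLetter, FreeMonoid.map_map]
  exact List.map_id w

theorem finite_range_evalWord [Finite Λ] (x : FreeMonoid (Λ ⊕ ℕ)) :
    (range fun a : ℕ → Λ => evalWord a x).Finite :=
  (List.finite_length_eq Λ x.length).subset (range_subset_iff.2 fun _ => List.length_map _)

/-- The left variable words: one-variable words that begin with their variable. -/
def leftVariableWords (Λ : Type*) : Set (FreeMonoid (Option Λ)) :=
  range (FreeMonoid.of none * ·)

variable (Λ) in
theorem exists_ultrafilter_map_substLetter_mul :
    ∃ u : Ultrafilter (FreeMonoid (Option Λ)), leftVariableWords Λ ∈ u ∧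
      ∀ a b : Λ, u.map (substLetter a) * u.map (substLetter b) = u.map (substLetter a) := by
  refine exists_forall_map_mul_map_eq Ultrafilter.continuous_mul_left
    Ultrafilter.continuous_mul_left
    (fun a : Λ => ⟨Ultrafilter.map (substLetter a), ultrafilter_map_mul (substLetter a).toMulHom⟩)
    (Ultrafilter.map (FreeMonoid.map some)) (fun a u => ?_)
    (ultrafilter_isClosed_basic (leftVariableWords Λ))
    ⟨pure (FreeMonoid.of none), ⟨1, mul_one _⟩⟩ fun u hu v => ?_
  · refine (Ultrafilter.map_map _ _ _).trans ((congrArg u.map ?_).trans u.map_id)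
    exact funext (substLetter_map_some a)
  · refine (Ultrafilter.eventually_mul u v (· ∈ leftVariableWords Λ)).2 ?_
    filter_upwards [hu]
    rintro _ ⟨w, rfl⟩
    exact Filter.Eventually.of_forall fun x => ⟨w * x, (mul_assoc _ _ _).symm⟩

/-- The words that lie in `A` and remain in `A` when extended by any instance of most
one-variable words. -/
def IsExtendible (u : Ultrafilter (FreeMonoid (Option Λ))) (A : Set (FreeMonoid Λ))
    (w : FreeMonoid Λ) : Prop :=
  w ∈ A ∧ ∀ a, ∀ᶠ v in u, w * substLetter a v ∈ A

/-- Chains of longer and longer finite words in which the `k`-th step appends a word that begins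
with the new variable `k` and contains no other variable. -/
structure IsVariableChain (x : ℕ → FreeMonoid (Λ ⊕ ℕ)) : Prop where
  zero : ∀ i, Sum.inr i ∉ (x 0).toList
  succ : ∀ k, ∃ v ∈ leftVariableWords Λ, x (k + 1) = x k * nameVariable k v

section Extension

variable {u : Ultrafilter (FreeMonoid (Option Λ))}
  (hu : ∀ a b : Λ, u.map (substLetter a) * u.map (substLetter b) = u.map (substLetter a))
  {A : Set (FreeMonoid Λ)}

include hu

theorem eventually_eventually_mul_substLetter (a b : Λ)
    (hA : ∀ᶠ v in u, substLetter a v ∈ A) :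
    ∀ᶠ v in u, ∀ᶠ x in u, substLetter a v * substLetter b x ∈ A := by
  have hmap : ∀ᶠ w in u.map (substLetter a), w ∈ A := hA
  rw [← hu a b, Ultrafilter.eventually_mul] at hmap
  exact hmap

variable [Finite Λ]

theorem exists_isExtendible {a : Λ} (hA : ∀ᶠ v in u, substLetter a v ∈ A) :
    ∃ w, IsExtendible u A w := by
  have hext := Filter.eventually_all.2 fun b => eventually_eventually_mul_substLetter hu a b hA
  obtain ⟨v, hv⟩ := (hA.and hext).exists
  exact ⟨_, hv⟩

theorem IsExtendible.eventually_forall {w : FreeMonoid Λ} (hw : IsExtendible u A w) :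
    ∀ᶠ v in u, ∀ a, IsExtendible u A (w * substLetter a v) := by
  refine Filter.eventually_all.2 fun a => (hw.2 a).and (Filter.eventually_all.2 fun b => ?_)
  have hext := eventually_eventually_mul_substLetter hu (A := (w * ·) ⁻¹' A) a b (hw.2 a)
  simpa only [mem_preimage, mul_assoc] using hext

theorem exists_isExtendible_evalWord_mul (hvar : leftVariableWords Λ ∈ u)
    {x : FreeMonoid (Λ ⊕ ℕ)} (hx : ∀ a, IsExtendible u A (evalWord a x)) (k : ℕ) :
    ∃ v ∈ leftVariableWords Λ, ∀ a, IsExtendible u A (evalWord a (x * nameVariable k v)) := by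
  have hev : ∀ᶠ v in u, ∀ w ∈ range fun a => evalWord a x,
      ∀ b, IsExtendible u A (w * substLetter b v) :=
    (Filter.eventually_all_finite (finite_range_evalWord x)).2
      (forall_mem_range.2 fun a => (hx a).eventually_forall hu)
  obtain ⟨v, hv, hext⟩ := (Filter.Eventually.and hvar hev).exists
  refine ⟨v, hv, fun a => ?_⟩
  rw [map_mul, evalWord_nameVariable]
  exact hext _ (mem_range_self a) _

theorem exists_isVariableChain (hvar : leftVariableWords Λ ∈ u) {w : FreeMonoid Λ}
    (hw : IsExtendible u A w) :
    ∃ x : ℕ → FreeMonoid (Λ ⊕ ℕ), IsVariableChain x ∧ ∀ k a, evalWord a (x k) ∈ A := by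
  choose v hv hext using fun (k : ℕ) (x : {x // ∀ a, IsExtendible u A (evalWord a x)}) =>
    exists_isExtendible_evalWord_mul hu hvar x.2 k
  have hstart : ∀ a, IsExtendible u A (evalWord a (FreeMonoid.map Sum.inl w)) := fun a => by
    have hval : evalWord a (FreeMonoid.map Sum.inl w) = w :=
      FreeMonoid.map_map.trans (List.map_id w)
    rwa [hval]
  let x : ℕ → {x // ∀ a, IsExtendible u A (evalWord a x)} := fun k =>
    Nat.rec ⟨_, hstart⟩ (fun k x => ⟨_, hext k x⟩) k
  refine ⟨fun k => (x k).1, ⟨fun i hi => ?_, fun k => ⟨v k (x k), hv k (x k), rfl⟩⟩,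
    fun k a => ((x k).2 a).1⟩
  obtain ⟨_, -, h⟩ := List.mem_map.1 hi
  exact Sum.inl_ne_inr h

end Extension

namespace IsVariableChain

variable {x : ℕ → FreeMonoid (Λ ⊕ ℕ)}

theorem exists_succ_eq_append (hx : IsVariableChain x) (k : ℕ) :
    ∃ t, x (k + 1) = (x k).toList ++ Sum.inr k :: t := by
  obtain ⟨_, ⟨v, rfl⟩, hv⟩ := hx.succ k
  exact ⟨(nameVariable k v).toList, by rw [hv, map_mul]; rfl⟩

theorem lt_of_inr_mem (hx : IsVariableChain x) {i : ℕ} :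
    ∀ {k}, Sum.inr i ∈ (x k).toList → i < k
  | 0, hi => absurd hi (hx.zero i)
  | k + 1, hi => by
    obtain ⟨v, -, hv⟩ := hx.succ k
    rw [hv, FreeMonoid.toList_mul, List.mem_append] at hi
    rcases hi with hi | hi
    · exact (hx.lt_of_inr_mem hi).trans k.lt_succ_self
    · obtain ⟨_ | a, -, ho⟩ := List.mem_map.1 hi
      · exact (Sum.inr_injective ho).ge.trans_lt k.lt_succ_self
      · exact absurd ho Sum.inl_ne_inr

end IsVariableChain

theorem exists_forall_map_range_eq {α : Type*} {x : ℕ → List α} (hpre : ∀ k, x k <+: x (k + 1))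
    (hlen : StrictMono fun k => (x k).length) :
    ∃ H : ℕ → α, ∀ k, (List.range (x k).length).map H = x k := by
  have hpre' : ∀ {k m}, k ≤ m → x k <+: x m := fun {k m} hkm => by
    induction m, hkm using Nat.le_induction with
    | base => exact List.prefix_rfl
    | succ m _ ih => exact ih.trans (hpre m)
  have hlt : ∀ j, j < (x (j + 1)).length := fun j => hlen.le_apply (x := j + 1)
  refine ⟨fun j => (x (j + 1))[j]'(hlt j), fun k => List.ext_getElem (by simp) fun j _ hj => ?_⟩
  rw [List.getElem_map, List.getElem_range]
  rcases le_total (j + 1) k with hjk | hkj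
  · exact (hpre' hjk).getElem _
  · exact ((hpre' hkj).getElem _).symm

/-- An infinite parameter word: a sequence of letters and variables in which every variable `k`
occurs, first at `pos k`, and the first occurrences are in increasing order. -/
structure ParamWord (Λ : Type*) where
  toFun : ℕ → Λ ⊕ ℕ
  pos : ℕ → ℕ
  toFun_pos : ∀ k, toFun (pos k) = Sum.inr k
  lt_of_toFun_eq : ∀ {i j k}, j < pos k → toFun j = Sum.inr i → i < k

namespace ParamWord

/-- The part of a parameter word that precedes the first occurrence of the variable `k`, evaluated
at the letters `a`. -/
def eval (H : ParamWord Λ) (k : ℕ) (a : ℕ → Λ) : List Λ :=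
  (List.range (H.pos k)).map fun j => Sum.elim id a (H.toFun j)

end ParamWord

theorem IsVariableChain.exists_paramWord {x : ℕ → FreeMonoid (Λ ⊕ ℕ)} (hx : IsVariableChain x) :
    ∃ H : ParamWord Λ, ∀ k a, H.eval k a = (evalWord a (x k)).toList := by
  choose t ht using hx.exists_succ_eq_append
  have hsucc : ∀ k, (x (k + 1)).toList = (x k).toList ++ Sum.inr k :: t k := ht
  have hlen : StrictMono fun k => (x k).toList.length := strictMono_nat_of_lt_succ fun k => by
    rw [hsucc, List.length_append, List.length_cons]
    omega
  obtain ⟨H, hH⟩ := exists_forall_map_range_eq (fun k => ⟨_, (hsucc k).symm⟩) hlen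
  have hget : ∀ k {j} (hj : j < (x k).toList.length), (x k).toList[j] = H j := fun k _ hj =>
    (List.getElem_of_eq (hH k).symm hj).trans (by simp)
  refine ⟨⟨H, fun k => (x k).toList.length, fun k => ?_, fun {i j k} hj hi => ?_⟩, fun k a => ?_⟩
  · rw [← hget (k + 1) (hlen k.lt_succ_self)]
    exact (List.getElem_of_eq (hsucc k) _).trans (by simp)
  · exact hx.lt_of_inr_mem (hi ▸ hget k hj ▸ List.getElem_mem hj)
  · rw [evalWord, FreeMonoid.toList_map, ← hH k, List.map_map]
    rfl

theorem carlson_simpson [Finite Λ] [Nonempty Λ] (χ : List Λ → Prop) :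
    ∃ H : ParamWord Λ, (∀ k a, χ (H.eval k a)) ∨ ∀ k a, ¬ χ (H.eval k a) := by
  obtain ⟨u, hvar, hu⟩ := exists_ultrafilter_map_substLetter_mul Λ
  obtain ⟨a⟩ := ‹Nonempty Λ›
  have hhom : ∀ A : Set (FreeMonoid Λ), (∀ᶠ v in u, substLetter a v ∈ A) →
      ∃ H : ParamWord Λ, ∀ k b, FreeMonoid.ofList (H.eval k b) ∈ A := fun A hA => by
    obtain ⟨w, hw⟩ := exists_isExtendible hu hA
    obtain ⟨x, hx, hxA⟩ := exists_isVariableChain hu hvar hw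
    obtain ⟨H, hH⟩ := hx.exists_paramWord
    exact ⟨H, fun k b => hH k b ▸ hxA k b⟩
  rcases u.eventually_or.1 (Filter.Eventually.of_forall fun v => em (χ (substLetter a v).toList))
    with hχ | hχ
  · exact (hhom {w | χ w.toList} hχ).imp fun _ => Or.inl
  · exact (hhom {w | ¬ χ w.toList} hχ).imp fun _ => Or.inr

end CarlsonSimpson

/-! ### Rigid surjections -/

theorem strictMono_of_rightInverse {φ pos : ℕ → ℕ} (hpos : ∀ k, φ (pos k) = k)
    (hlt : ∀ {i k}, i < pos k → φ i < k) : StrictMono pos := by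
  refine strictMono_nat_of_lt_succ fun k => ?_
  by_contra! hle
  rcases hle.eq_or_lt with heq | hlt'
  · exact k.succ_ne_self ((hpos (k + 1)).symm.trans (heq ▸ hpos k))
  · exact (hlt hlt').not_ge ((hpos (k + 1)).symm ▸ k.le_succ)

/-- Rigid surjections of `ℕ` that respect residues modulo `l`: `pos k` is the first point of the
fibre over `k`, the fibres are ordered by their first points, and `pos k` is congruent to `k`. A
rigid surjection encodes the operation of merging the classes of an equivalence relation. -/
structure RigidSurj (l : ℕ) where
  toFun : ℕ → ℕ
  pos : ℕ → ℕ
  toFun_pos : ∀ k, toFun (pos k) = k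
  toFun_lt : ∀ {i k}, i < pos k → toFun i < k
  pos_modEq : ∀ k, pos k ≡ k [MOD l]

namespace RigidSurj

variable {l : ℕ}

theorem pos_le_pos {f g : RigidSurj l} (h : f.toFun = g.toFun) (k : ℕ) : f.pos k ≤ g.pos k := by
  by_contra! hlt
  exact (f.toFun_lt hlt).ne (h ▸ g.toFun_pos k)

instance : FunLike (RigidSurj l) ℕ ℕ where
  coe := toFun
  coe_injective f g h := by
    have hpos : f.pos = g.pos :=
      funext fun k => (pos_le_pos h k).antisymm (pos_le_pos h.symm k)
    cases f
    cases g
    congr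

variable {f g h t : RigidSurj l} {i j k m n d : ℕ}

@[ext] theorem ext (hfg : ∀ i, f i = g i) : f = g := DFunLike.ext f g hfg

@[simp] theorem apply_pos (f : RigidSurj l) (k : ℕ) : f (f.pos k) = k := f.toFun_pos k

theorem apply_lt (hi : i < f.pos k) : f i < k := f.toFun_lt hi

theorem pos_strictMono (f : RigidSurj l) : StrictMono f.pos :=
  strictMono_of_rightInverse f.toFun_pos f.toFun_lt

theorem le_pos (f : RigidSurj l) (k : ℕ) : k ≤ f.pos k := f.pos_strictMono.le_apply

theorem apply_le (f : RigidSurj l) (i : ℕ) : f i ≤ i :=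
  Nat.lt_succ_iff.1 (apply_lt (f.le_pos (i + 1)))

theorem pos_apply_le (f : RigidSurj l) (i : ℕ) : f.pos (f i) ≤ i := by
  by_contra! hlt
  exact (apply_lt hlt).false

theorem pos_eq_of_apply_eq (hi : f i = k) (hlt : ∀ j < i, f j < k) : f.pos k = i := by
  refine le_antisymm (hi ▸ f.pos_apply_le i) (not_lt.1 fun hpos => ?_)
  exact (hlt _ hpos).ne (f.apply_pos k)

instance : Monoid (RigidSurj l) where
  one := ⟨id, id, fun _ => rfl, id, fun _ => rfl⟩
  mul f g :=
    { toFun := fun i => f (g i)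
      pos := fun k => g.pos (f.pos k)
      toFun_pos := fun k => by simp
      toFun_lt := fun hi => apply_lt (apply_lt hi)
      pos_modEq := fun k => (g.pos_modEq _).trans (f.pos_modEq k) }
  mul_assoc _ _ _ := rfl
  one_mul _ := rfl
  mul_one _ := rfl

@[simp] theorem mul_apply (f g : RigidSurj l) (i : ℕ) : (f * g) i = f (g i) := rfl
@[simp] theorem mul_pos (f g : RigidSurj l) (k : ℕ) : (f * g).pos k = g.pos (f.pos k) := rfl

variable (l) in
/-- The submonoid of the rigid surjections that fix `0, …, n`. -/
def fixing (n : ℕ) : Submonoid (RigidSurj l) where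
  carrier := {f | ∀ i ≤ n, f i = i}
  one_mem' := fun _ _ => rfl
  mul_mem' hf hg i hi := by rw [mul_apply, hg i hi, hf i hi]

theorem fixing_antitone : Antitone (fixing l) := fun _ _ hmn _ hf i hi => hf i (hi.trans hmn)

theorem pos_eq_of_mem_fixing (hf : f ∈ fixing l n) (hk : k ≤ n) : f.pos k = k :=
  pos_eq_of_apply_eq (hf k hk) fun j hj => (hf j (by omega)).trans_lt hj

section OfTail

variable {φ ρ : ℕ → ℕ}

/-- The rigid surjection that is the identity on `0, …, n` and is given by `φ` after that. -/
def ofTail (n : ℕ) (φ ρ : ℕ → ℕ) (hφρ : ∀ j, φ (ρ j) = n + 1 + j)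
    (hlt : ∀ i j, i < ρ j → φ i < n + 1 + j) (hρ : ∀ j, ρ j ≡ j [MOD l]) : RigidSurj l where
  toFun i := if i ≤ n then i else φ (i - (n + 1))
  pos k := if k ≤ n then k else n + 1 + ρ (k - (n + 1))
  toFun_pos k := by
    by_cases hk : k ≤ n
    · simp [hk]
    · rw [if_neg hk, if_neg (by omega), Nat.add_sub_cancel_left, hφρ]
      omega
  toFun_lt {i k} hi := by
    split_ifs at hi ⊢ with hk hin hin
    · exact hi
    · omega
    · omega
    · have := hlt (i - (n + 1)) (k - (n + 1)) (by omega)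
      omega
  pos_modEq k := by
    split_ifs with hk
    · rfl
    · obtain ⟨j, rfl⟩ := Nat.exists_eq_add_of_le (Nat.lt_of_not_ge hk)
      rw [Nat.add_sub_cancel_left]
      exact (hρ j).add_left _

variable {hφρ : ∀ j, φ (ρ j) = n + 1 + j} {hlt : ∀ i j, i < ρ j → φ i < n + 1 + j}
  {hρ : ∀ j, ρ j ≡ j [MOD l]}

theorem ofTail_mem_fixing : ofTail n φ ρ hφρ hlt hρ ∈ fixing l n := fun _ hi => if_pos hi

theorem ofTail_apply_add : ofTail n φ ρ hφρ hlt hρ (n + 1 + j) = φ j :=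
  (if_neg (by omega)).trans (by rw [Nat.add_sub_cancel_left])

theorem ofTail_pos_add : (ofTail n φ ρ hφρ hlt hρ).pos (n + 1 + j) = n + 1 + ρ j :=
  (if_neg (by omega)).trans (by rw [Nat.add_sub_cancel_left])

end OfTail

/-- The simplest rigid surjection that agrees with `f` below `f.pos n`, where it takes the values
`0, …, n - 1`; after that it is a shift. It plays the role of the `n`-th approximation of `f`. -/
def trunc (f : RigidSurj l) (n : ℕ) : RigidSurj l where
  toFun i := if i < f.pos n then f i else n + (i - f.pos n)
  pos k := if k < n then f.pos k else f.pos n + (k - n)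
  toFun_pos k := by
    by_cases hk : k < n
    · simp [hk, f.pos_strictMono hk]
    · simp only [hk, if_false, if_neg (Nat.not_lt.2 (Nat.le_add_right _ _))]
      omega
  toFun_lt {i k} hi := by
    split_ifs at hi ⊢ with hin hk hk
    · exact apply_lt hi
    · exact (apply_lt hin).trans_le (not_lt.1 hk)
    · exact absurd (hi.trans (f.pos_strictMono hk)) hin
    · omega
  pos_modEq k := by
    split_ifs with hk
    · exact f.pos_modEq k
    · obtain ⟨j, rfl⟩ := Nat.exists_eq_add_of_le (not_lt.1 hk)
      rw [Nat.add_sub_cancel_left]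
      exact (f.pos_modEq n).add_right j

theorem trunc_apply_of_lt (hi : i < f.pos n) : f.trunc n i = f i := if_pos hi

theorem trunc_apply_add (f : RigidSurj l) (n j : ℕ) : f.trunc n (f.pos n + j) = n + j :=
  (if_neg (by omega)).trans (by rw [Nat.add_sub_cancel_left])

theorem trunc_pos_self (f : RigidSurj l) (n : ℕ) : (f.trunc n).pos n = f.pos n := by
  simp [trunc]

theorem trunc_congr (hpos : f.pos n = g.pos n) (h : ∀ i < f.pos n, f i = g i) :
    f.trunc n = g.trunc n := by
  ext i
  rcases lt_or_ge i (f.pos n) with hi | hi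
  · rw [trunc_apply_of_lt hi, trunc_apply_of_lt (hpos ▸ hi), h i hi]
  · obtain ⟨j, rfl⟩ := Nat.exists_eq_add_of_le hi
    rw [trunc_apply_add, hpos, trunc_apply_add]

theorem trunc_trunc (f : RigidSurj l) (n : ℕ) : (f.trunc n).trunc n = f.trunc n :=
  trunc_congr (f.trunc_pos_self n) fun _ hi => trunc_apply_of_lt (f.trunc_pos_self n ▸ hi)

theorem one_trunc (n : ℕ) : (1 : RigidSurj l).trunc n = 1 := by
  ext i
  rcases lt_or_ge i n with hi | hi
  · exact trunc_apply_of_lt hi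
  · exact (if_neg (not_lt.2 hi)).trans (Nat.add_sub_cancel' hi)

theorem apply_eq_of_apply_eq_iff (hfg : ∀ i < d, ∀ j < d, f i = f j ↔ g i = g j) :
    ∀ i < d, f i = g i := by
  intro i
  induction i using Nat.strong_induction_on with
  | _ i ih =>
    intro hi
    rcases lt_trichotomy (f i) (g i) with hlt | heq | hgt
    · have hj : g.pos (f i) < i := (g.pos_strictMono hlt).trans_le (g.pos_apply_le i)
      have hfj : f (g.pos (f i)) = f i := (ih _ hj (hj.trans hi)).trans (g.apply_pos _)
      exact (g.apply_pos _).symm.trans ((hfg _ (hj.trans hi) _ hi).1 hfj)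
    · exact heq
    · have hj : f.pos (g i) < i := (f.pos_strictMono hgt).trans_le (f.pos_apply_le i)
      have hgj : g (f.pos (g i)) = g i := (ih _ hj (hj.trans hi)).symm.trans (f.apply_pos _)
      exact ((hfg _ (hj.trans hi) _ hi).2 hgj).symm.trans (f.apply_pos _)

theorem le_of_pos_eq (hpos : f.pos m = g.pos n) (hfg : ∀ i < f.pos m, f i = g i) : n ≤ m := by
  by_contra! hmn
  have hlt : g.pos m < f.pos m := hpos ▸ g.pos_strictMono hmn
  exact (apply_lt hlt).ne ((hfg _ hlt).trans (g.apply_pos m))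

theorem trunc_eq_of_apply_eq_iff (hpos : f.pos m = g.pos n)
    (hfg : ∀ i < f.pos m, ∀ j < f.pos m, f i = f j ↔ g i = g j) : f.trunc n = g.trunc n := by
  have heq := apply_eq_of_apply_eq_iff hfg
  obtain rfl : m = n :=
    (le_of_pos_eq hpos.symm fun i hi => (heq i (hpos ▸ hi)).symm).antisymm (le_of_pos_eq hpos heq)
  exact trunc_congr hpos heq

/-- The second factor of the factorization `f = f.tail n * f.trunc n`. -/
def tail (f : RigidSurj l) (n : ℕ) : RigidSurj l :=
  ofTail n (fun j => f (f.pos n + 1 + j)) (fun j => f.pos (n + 1 + j) - (f.pos n + 1))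
    (fun j => by
      have hlt := f.pos_strictMono (show n < n + 1 + j by omega)
      rw [Nat.add_sub_cancel' hlt, apply_pos])
    (fun i j hi => apply_lt (by omega))
    (fun j => by
      have hlt := f.pos_strictMono (show n < n + 1 + j by omega)
      refine Nat.ModEq.add_left_cancel ((f.pos_modEq n).add_right 1) ?_
      rw [Nat.add_sub_cancel' hlt]
      exact f.pos_modEq _)

theorem tail_mem_fixing (f : RigidSurj l) (n : ℕ) : f.tail n ∈ fixing l n := ofTail_mem_fixing

theorem tail_mul_trunc (f : RigidSurj l) (n : ℕ) : f.tail n * f.trunc n = f := by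
  ext i
  rw [mul_apply]
  rcases lt_trichotomy i (f.pos n) with hi | rfl | hi
  · rw [trunc_apply_of_lt hi, f.tail_mem_fixing n _ (apply_lt hi).le]
  · rw [← Nat.add_zero (f.pos n), trunc_apply_add, Nat.add_zero, Nat.add_zero, apply_pos,
      f.tail_mem_fixing n n le_rfl]
  · obtain ⟨j, rfl⟩ := Nat.exists_eq_add_of_le hi
    rw [Nat.succ_eq_add_one, add_assoc, trunc_apply_add, ← add_assoc, ← add_assoc]
    exact ofTail_apply_add

theorem exists_mul_eq_of_trunc_eq (hfg : f.trunc n = g.trunc n) (hg : g.trunc n = g) :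
    ∃ h ∈ fixing l n, h * g = f :=
  ⟨f.tail n, f.tail_mem_fixing n, by rw [← hg, ← hfg, tail_mul_trunc]⟩

theorem exists_mul_eq_mul_of_trunc_eq_self (ht : t.trunc n = t) (hh : h ∈ fixing l (t.pos n)) :
    ∃ h' ∈ fixing l n, h' * t = t * h := by
  have hpos : (t * h).pos n = t.pos n := pos_eq_of_mem_fixing hh le_rfl
  exact exists_mul_eq_of_trunc_eq
    (trunc_congr hpos fun i hi => congrArg t (hh i (hpos ▸ hi).le)) ht

theorem exists_mul_eq_mul_of_mem_fixing (ht : t.trunc n = t) (hh : h ∈ fixing l n) :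
    ∃ h' ∈ fixing l (t.pos n), t * h' = h * t := by
  have hadd : ∀ j, t (t.pos n + j) = n + j := fun j =>
    (DFunLike.congr_fun ht _).symm.trans (trunc_apply_add t n j)
  have hpos : ∀ j, t.pos (n + j) = t.pos n + j := fun j => by
    rw [← ht]
    simp [trunc]
  have hle : ∀ j, n + 1 + j ≤ h.pos (n + 1 + j) := fun j => h.le_pos _
  refine ⟨ofTail (t.pos n) (fun j => t.pos (h (n + 1 + j))) (fun j => h.pos (n + 1 + j) - (n + 1))
    (fun j => ?_) (fun i j hi => ?_) (fun j => ?_), ofTail_mem_fixing, ext fun i => ?_⟩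
  · rw [Nat.add_sub_cancel' (by have := hle j; omega), apply_pos, add_assoc, hpos, add_assoc]
  · rw [add_assoc (t.pos n), ← hpos, ← add_assoc]
    exact t.pos_strictMono (apply_lt (show n + 1 + i < h.pos (n + 1 + j) by omega))
  · refine Nat.ModEq.add_left_cancel' (n + 1) ?_
    rw [Nat.add_sub_cancel' (by have := hle j; omega)]
    exact h.pos_modEq _
  · rw [mul_apply, mul_apply]
    rcases lt_or_ge (t.pos n) i with hi | hi
    · obtain ⟨j, rfl⟩ := Nat.exists_eq_add_of_le hi
      rw [Nat.succ_eq_add_one, ofTail_apply_add, apply_pos, add_assoc (t.pos n), hadd, ← add_assoc]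
    · have hti : t i ≤ n := by
        rcases hi.lt_or_eq with hlt | rfl
        · exact (apply_lt hlt).le
        · exact (t.apply_pos n).le
      rw [ofTail_mem_fixing i hi, hh _ hti]

variable (l) in
theorem finite_setOf_trunc_eq_self (d : ℕ) :
    {p : RigidSurj l × ℕ | p.1.trunc p.2 = p.1 ∧ p.1.pos p.2 = d}.Finite := by
  refine Set.Finite.of_injOn (t := univ)
    (f := fun p (i : Fin (d + 1)) => (⟨p.1 i, (p.1.apply_le i).trans_lt i.2⟩ : Fin (d + 1)))
    (mapsTo_univ _ _) ?_ finite_univ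
  rintro ⟨t, n⟩ ⟨ht : t.trunc n = t, hd : t.pos n = d⟩
    ⟨t', n'⟩ ⟨ht' : t'.trunc n' = t', hd' : t'.pos n' = d⟩ heq
  have hagree : ∀ i ≤ d, t i = t' i := fun i hi =>
    congrArg Fin.val (congrFun heq ⟨i, Nat.lt_succ_of_le hi⟩)
  obtain rfl : n = n' := by rw [← t.apply_pos n, hd, hagree d le_rfl, ← hd', apply_pos]
  have htt' : t = t' := by
    rw [← ht, ← ht']
    exact trunc_congr (hd.trans hd'.symm) fun i hi => hagree i (hd ▸ hi).le
  rw [htt']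

section Fusion

/-- The product `h (i + m - 1) * ⋯ * h i`. -/
def segmentProd (h : ℕ → RigidSurj l) (i : ℕ) : ℕ → RigidSurj l
  | 0 => 1
  | m + 1 => h (i + m) * segmentProd h i m

theorem segmentProd_succ' (h : ℕ → RigidSurj l) (i m : ℕ) :
    segmentProd h i (m + 1) = segmentProd h (i + 1) m * h i := by
  induction m with
  | zero => rfl
  | succ m ih => rw [segmentProd, ih, segmentProd, mul_assoc, ← add_assoc, add_right_comm]

variable {N : ℕ} {h : ℕ → RigidSurj l}

theorem segmentProd_mem_fixing (hh : ∀ i, h i ∈ fixing l (N + i)) (i : ℕ) :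
    ∀ m, segmentProd h i m ∈ fixing l (N + i)
  | 0 => one_mem _
  | m + 1 => mul_mem (fixing_antitone (by omega) (hh (i + m))) (segmentProd_mem_fixing hh i m)

theorem segmentProd_apply (hh : ∀ i, h i ∈ fixing l (N + i)) (i : ℕ) {x m : ℕ} (hxm : x ≤ m) :
    segmentProd h i m x = segmentProd h i x x := by
  induction m, hxm using Nat.le_induction with
  | base => rfl
  | succ m hxm ih =>
    have hle := (segmentProd h i m).apply_le x
    rw [segmentProd, mul_apply, hh _ _ (by omega), ih]

theorem segmentProd_pos (hh : ∀ i, h i ∈ fixing l (N + i)) (i : ℕ) {k m : ℕ} (hkm : k ≤ m) :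
    (segmentProd h i m).pos k = (segmentProd h i k).pos k := by
  induction m, hkm using Nat.le_induction with
  | base => rfl
  | succ m hkm ih => rw [segmentProd, mul_pos, pos_eq_of_mem_fixing (hh _) (by omega), ih]

/-- The infinite product `⋯ * h (i + 1) * h i`. -/
def tailProd (hh : ∀ i, h i ∈ fixing l (N + i)) (i : ℕ) : RigidSurj l where
  toFun x := segmentProd h i x x
  pos k := (segmentProd h i k).pos k
  toFun_pos k := by
    have happly := (segmentProd h i ((segmentProd h i k).pos k)).apply_pos k
    rwa [segmentProd_pos hh i ((segmentProd h i k).le_pos k)] at happly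
  toFun_lt {x k} hx := by
    rw [← segmentProd_pos hh i (le_max_left k x)] at hx
    rw [← segmentProd_apply hh i (le_max_right k x)]
    exact apply_lt hx
  pos_modEq _ := pos_modEq _ _

theorem tailProd_mem_fixing (hh : ∀ i, h i ∈ fixing l (N + i)) (i : ℕ) :
    tailProd hh i ∈ fixing l (N + i) :=
  fun x hx => segmentProd_mem_fixing hh i x x hx

theorem tailProd_succ_mul (hh : ∀ i, h i ∈ fixing l (N + i)) (i : ℕ) :
    tailProd hh (i + 1) * h i = tailProd hh i := by
  refine ext fun x => Eq.symm ?_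
  calc segmentProd h i x x
    _ = segmentProd h i (x + 1) x := (segmentProd_apply hh i x.le_succ).symm
    _ = segmentProd h (i + 1) x (h i x) := by rw [segmentProd_succ', mul_apply]
    _ = segmentProd h (i + 1) (h i x) (h i x) := segmentProd_apply hh (i + 1) ((h i).apply_le x)

end Fusion

section Action

variable {S : Type*} [MulAction (RigidSurj l) S] {Q : ℕ → Set S} {s : S}

open MulAction

theorem smul_mem_orbit (hh : h ∈ fixing l n) (s : S) : h • s ∈ orbit (fixing l n) s :=
  ⟨⟨h, hh⟩, rfl⟩

theorem orbit_fixing_subset {s t : S} (ht : t ∈ orbit (fixing l n) s) :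
    orbit (fixing l n) t ⊆ orbit (fixing l n) s := by
  obtain ⟨h, rfl⟩ := ht
  exact orbit_smul_subset h s

theorem orbit_fixing_antitone (s : S) : Antitone fun n => orbit (fixing l n) s := by
  rintro m n hmn _ ⟨⟨h, hh⟩, rfl⟩
  exact smul_mem_orbit (fixing_antitone hmn hh) s

/-- The points `s` for which `t • s` satisfies the requirement `Q n`, for every `t` that is its own
`n`-th truncation and becomes a shift from `d` on. -/
def diagonalReq (Q : ℕ → Set S) (d : ℕ) : Set S :=
  {s | ∀ (t : RigidSurj l) (n : ℕ), t.trunc n = t → t.pos n = d → t • s ∈ Q n}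

theorem smul_smul_mem_of_trunc_eq_self (hQ : ∀ n, ∀ s ∈ Q n, orbit (fixing l n) s ⊆ Q n)
    (ht : t.trunc n = t) (hs : t • s ∈ Q n) (hh : h ∈ fixing l (t.pos n)) :
    t • h • s ∈ Q n := by
  obtain ⟨h', hh', heq⟩ := exists_mul_eq_mul_of_trunc_eq_self ht hh
  rw [← mul_smul, ← heq, mul_smul]
  exact hQ n _ hs (smul_mem_orbit hh' _)

theorem orbit_subset_diagonalReq (hQ : ∀ n, ∀ s ∈ Q n, orbit (fixing l n) s ⊆ Q n)
    (hs : s ∈ diagonalReq (l := l) Q d) :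
    orbit (fixing l d) s ⊆ diagonalReq (l := l) Q d := by
  rintro _ ⟨⟨h, hh⟩, rfl⟩ t n ht rfl
  exact smul_smul_mem_of_trunc_eq_self hQ ht (hs t n ht rfl) hh

theorem exists_mem_diagonalReq (hQ : ∀ n, ∀ s ∈ Q n, orbit (fixing l n) s ⊆ Q n)
    (hdense : ∀ n s, ∃ t ∈ orbit (fixing l n) s, t ∈ Q n) (d : ℕ) (s : S) :
    ∃ h ∈ fixing l d, h • s ∈ diagonalReq (l := l) Q d := by
  suffices hfin : ∀ F ⊆ {p : RigidSurj l × ℕ | p.1.trunc p.2 = p.1 ∧ p.1.pos p.2 = d}, F.Finite →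
      ∃ h ∈ fixing l d, ∀ p ∈ F, p.1 • h • s ∈ Q p.2 by
    obtain ⟨h, hh, hQh⟩ := hfin _ Subset.rfl (finite_setOf_trunc_eq_self l d)
    exact ⟨h, hh, fun t n ht hd => hQh (t, n) ⟨ht, hd⟩⟩
  intro F hF hfin
  induction F, hfin using Set.Finite.induction_on with
  | empty => exact ⟨1, one_mem _, by simp⟩
  | @insert p F _ _ ih =>
    obtain ⟨h, hh, hQh⟩ := ih ((subset_insert _ _).trans hF)
    obtain ⟨t, n⟩ := p
    obtain ⟨ht : t.trunc n = t, rfl⟩ := hF (mem_insert _ _)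
    obtain ⟨_, ⟨⟨k, hk⟩, rfl⟩, hQk⟩ := hdense n (t • h • s)
    obtain ⟨k', hk', heq⟩ := exists_mul_eq_mul_of_mem_fixing ht hk
    refine ⟨k' * h, mul_mem hk' hh, forall_mem_insert.2 ⟨?_, fun q hq => ?_⟩⟩
    · rw [mul_smul, ← mul_smul, heq, mul_smul]
      exact hQk
    · obtain ⟨hq', hd⟩ := hF (mem_insert_of_mem _ hq)
      rw [mul_smul]
      exact smul_smul_mem_of_trunc_eq_self hQ hq' (hQh q hq) (hd ▸ hk')

theorem exists_forall_ge_smul_mem {D : ℕ → Set S}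
    (hD : ∀ d, ∀ s ∈ D d, orbit (fixing l d) s ⊆ D d)
    (hdense : ∀ d s, ∃ h ∈ fixing l d, h • s ∈ D d) (N : ℕ) (s : S) :
    ∃ h ∈ fixing l N, ∀ d ≥ N, h • s ∈ D d := by
  choose h hh hDh using hdense
  let x : ℕ → S := fun i => Nat.rec s (fun i y => h (N + i) y • y) i
  have hk : ∀ i, h (N + i) (x i) ∈ fixing l (N + i) := fun i => hh _ _
  have hx : ∀ i, tailProd hk i • x i = tailProd hk 0 • s := fun i => by
    induction i with
    | zero => rfl
    | succ i ih => rw [← ih, ← tailProd_succ_mul hk i, mul_smul]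
  refine ⟨tailProd hk 0, tailProd_mem_fixing hk 0, fun d hd => ?_⟩
  obtain ⟨i, rfl⟩ := Nat.exists_eq_add_of_le hd
  rw [← hx (i + 1)]
  exact hD _ _ (hDh _ _) (smul_mem_orbit (fixing_antitone (by omega) (tailProd_mem_fixing hk _)) _)

theorem exists_forall_ge_orbit_subset (hQ : ∀ n, ∀ s ∈ Q n, orbit (fixing l n) s ⊆ Q n)
    (hdense : ∀ n s, ∃ t ∈ orbit (fixing l n) s, t ∈ Q n) (N : ℕ) (s : S) :
    ∃ t ∈ orbit (fixing l N) s, ∀ n ≥ N, orbit (fixing l N) t ⊆ Q n := by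
  obtain ⟨h, hh, hdiag⟩ := exists_forall_ge_smul_mem
    (fun d s hs => orbit_subset_diagonalReq hQ hs) (exists_mem_diagonalReq hQ hdense) N s
  refine ⟨h • s, smul_mem_orbit hh s, ?_⟩
  rintro n hn _ ⟨⟨f, -⟩, rfl⟩
  have htrunc : f.trunc n • h • s ∈ Q n :=
    hdiag (f.pos n) (hn.trans (f.le_pos n)) _ n (f.trunc_trunc n) (f.trunc_pos_self n)
  refine hQ n _ htrunc ⟨⟨f.tail n, f.tail_mem_fixing n⟩, ?_⟩
  change f.tail n • f.trunc n • h • s = f • h • s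
  rw [← mul_smul, tail_mul_trunc]

end Action

section Pigeonhole

theorem exists_pos_eq_add_mul (f : RigidSurj l) (k : ℕ) : ∃ m, f.pos k = k + l * m := by
  obtain ⟨x, hx⟩ := Nat.exists_eq_add_of_le (f.le_pos k)
  obtain ⟨m, rfl⟩ := (Nat.modEq_zero_iff_dvd (n := l)).1
    (Nat.ModEq.add_left_cancel' k (hx ▸ f.pos_modEq k))
  exact ⟨m, hx⟩

/-- The values of `f` between `n` and `f.pos (n + 1)`, cut into blocks of length `l`. These
values are at most `n`, so that reducing them modulo `n + 1` loses nothing. -/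
def word (n : ℕ) (f : RigidSurj l) : List (Fin l → Fin (n + 1)) :=
  (List.range ((f.pos (n + 1) - (n + 1)) / l)).map fun j r =>
    Fin.ofNat (n + 1) (f (n + 1 + l * j + r))

theorem word_eq (hl : 0 < l) (hm : f.pos (n + 1) = n + 1 + l * m) :
    f.word n =
      (List.range m).map fun j (r : Fin l) => Fin.ofNat (n + 1) (f (n + 1 + l * j + r)) := by
  rw [word, hm, Nat.add_sub_cancel_left, Nat.mul_div_cancel_left m hl]

theorem trunc_eq_of_word_eq (hl : 0 < l) (hf : f ∈ fixing l n) (hg : g ∈ fixing l n)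
    (hfg : f.word n = g.word n) : f.trunc (n + 1) = g.trunc (n + 1) := by
  obtain ⟨m, hm⟩ := f.exists_pos_eq_add_mul (n + 1)
  obtain ⟨m', hm'⟩ := g.exists_pos_eq_add_mul (n + 1)
  rw [word_eq hl hm, word_eq hl hm'] at hfg
  obtain rfl : m = m' := by simpa using congrArg List.length hfg
  refine trunc_congr (hm.trans hm'.symm) fun i hi => ?_
  rcases le_or_gt i n with hin | hin
  · rw [hf i hin, hg i hin]
  obtain ⟨x, rfl⟩ := Nat.exists_eq_add_of_le hin
  have hx : x / l < m := (Nat.div_lt_iff_lt_mul hl).2 (by rw [mul_comm]; omega)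
  have hval := congrFun (List.map_inj_left.1 hfg _ (List.mem_range.2 hx)) ⟨x % l, Nat.mod_lt x hl⟩
  simp only [Fin.ofNat, Fin.mk.injEq, add_assoc (n + 1), Nat.div_add_mod] at hval
  rwa [Nat.mod_eq_of_lt (apply_lt hi), Nat.mod_eq_of_lt (apply_lt (hm'.symm ▸ hm ▸ hi))] at hval

/-- The rigid surjection that is the identity on `0, …, n` and in whose subsequent blocks of length
`l` the parameter word `H` is written: a letter `v` stands for the values of `v`, and the `i`-th
variable for the values `n + 1 + l * i, …, n + l * (i + 1)`. -/
def ofParamWord (hl : 0 < l) (H : ParamWord (Fin l → Fin (n + 1))) : RigidSurj l :=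
  ofTail n
    (fun x => Sum.elim (fun v => (v ⟨x % l, Nat.mod_lt x hl⟩ : ℕ)) (fun i => n + 1 + l * i + x % l)
      (H.toFun (x / l)))
    (fun x => l * H.pos (x / l) + x % l)
    (fun x => by
      have hmod := Nat.mod_lt x hl
      simp [Nat.mul_add_div hl, Nat.div_eq_of_lt hmod, H.toFun_pos, add_assoc, Nat.div_add_mod])
    (fun y x hyx => by
      have hx := Nat.div_add_mod x l
      have hy := Nat.div_add_mod y l
      have hyl := Nat.mod_lt y hl
      have hle : y / l ≤ H.pos (x / l) :=
        Nat.lt_succ_iff.1 ((Nat.div_lt_iff_lt_mul hl).2 (by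
          have := Nat.mod_lt x hl
          rw [Nat.succ_mul, mul_comm]
          omega))
      rcases hH : H.toFun (y / l) with v | i
      · exact (v _).2.trans_le (Nat.le_add_right _ _)
      simp only [Sum.elim_inr]
      rcases hle.lt_or_eq with hlt | heq
      · have := Nat.mul_le_mul_left l (H.lt_of_toFun_eq hlt hH)
        rw [Nat.mul_succ] at this
        omega
      · rw [heq, H.toFun_pos, Sum.inr.injEq] at hH
        rw [← hH]
        rw [heq] at hy
        omega)
    (fun x => ((Nat.modEq_zero_iff_dvd.2 (dvd_mul_right _ _)).add_right _).trans
      (by simpa using Nat.mod_modEq x l))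

variable {hl : 0 < l} {H : ParamWord (Fin l → Fin (n + 1))}

theorem ofParamWord_mem_fixing : ofParamWord hl H ∈ fixing l n := ofTail_mem_fixing

theorem ofParamWord_apply (j : ℕ) (r : Fin l) :
    ofParamWord hl H (n + 1 + l * j + r) =
      Sum.elim (fun v => (v r : ℕ)) (fun i => n + 1 + l * i + r) (H.toFun j) := by
  rw [add_assoc, ofParamWord, ofTail_apply_add]
  simp [Nat.mul_add_div hl, Nat.mod_eq_of_lt r.2, Nat.div_eq_of_lt r.2]

theorem ofParamWord_pos (m : ℕ) :
    (ofParamWord hl H).pos (n + 1 + l * m) = n + 1 + l * H.pos m := by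
  rw [ofParamWord, ofTail_pos_add]
  simp [hl]

theorem exists_word_mul_ofParamWord (hf : f ∈ fixing l n) :
    ∃ k a, (f * ofParamWord hl H).word n = H.eval k a := by
  obtain ⟨m, hm⟩ := f.exists_pos_eq_add_mul (n + 1)
  refine ⟨m, fun i r => Fin.ofNat (n + 1) (f (n + 1 + l * i + r)), ?_⟩
  rw [word_eq hl (m := H.pos m) (by rw [mul_pos, hm, ofParamWord_pos]), ParamWord.eval]
  refine List.map_congr_left fun j _ => funext fun r => ?_
  rw [mul_apply, ofParamWord_apply]
  rcases H.toFun j with v | i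
  · rw [Sum.elim_inl, Sum.elim_inl, hf _ (Nat.lt_succ_iff.1 (v r).2)]
    exact Fin.ofNat_val_eq_self _
  · rfl

theorem exists_forall_mul_mem_or_forall_mul_notMem (hl : 0 < l) (n : ℕ) (C : Set (RigidSurj l))
    (hC : ∀ f ∈ fixing l n, ∀ h ∈ fixing l (n + 1), (h * f ∈ C ↔ f ∈ C)) :
    ∃ h ∈ fixing l n, (∀ f ∈ fixing l n, f * h ∈ C) ∨ ∀ f ∈ fixing l n, f * h ∉ C := by
  have htrunc : ∀ f ∈ fixing l n, (f.trunc (n + 1) ∈ C ↔ f ∈ C) := fun f hf => by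
    have hmem : f.trunc (n + 1) ∈ fixing l n := fun i hi =>
      (trunc_apply_of_lt ((Nat.lt_succ_of_le hi).trans_le (f.le_pos _))).trans (hf i hi)
    rw [← hC _ hmem _ (f.tail_mem_fixing _), tail_mul_trunc]
  have hword : ∀ f ∈ fixing l n, ((∃ g ∈ fixing l n, g.word n = f.word n ∧ g ∈ C) ↔ f ∈ C) :=
    fun f hf => ⟨fun ⟨g, hg, hgf, hgC⟩ => by
      rwa [← htrunc f hf, ← trunc_eq_of_word_eq hl hg hf hgf, htrunc g hg],
      fun hfC => ⟨f, hf, rfl, hfC⟩⟩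
  obtain ⟨H, hH⟩ := carlson_simpson fun w => ∃ g ∈ fixing l n, g.word n = w ∧ g ∈ C
  have heval : ∀ f ∈ fixing l n, ∃ k a,
      ((∃ g ∈ fixing l n, g.word n = H.eval k a ∧ g ∈ C) ↔ f * ofParamWord hl H ∈ C) :=
    fun f hf => by
      obtain ⟨k, a, hka⟩ := exists_word_mul_ofParamWord (hl := hl) (H := H) hf
      exact ⟨k, a, hka ▸ hword _ (mul_mem hf ofParamWord_mem_fixing)⟩
  refine ⟨ofParamWord hl H, ofParamWord_mem_fixing,
    hH.imp (fun hall f hf => ?_) fun hnone f hf => ?_⟩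
  · obtain ⟨k, a, hka⟩ := heval f hf
    exact hka.1 (hall k a)
  · obtain ⟨k, a, hka⟩ := heval f hf
    exact fun hmem => hnone k a (hka.2 hmem)

end Pigeonhole

theorem isEllentuck (hl : 0 < l) {S : Type*} [MulAction (RigidSurj l) S]
    [TopologicalSpace S]
    (hopen : ∀ U : Set S, IsOpen U ↔ ∀ s ∈ U, ∃ n, MulAction.orbit (fixing l n) s ⊆ U) :
    IsEllentuck fun n (s : S) => MulAction.orbit (fixing l n) s where
  mem_self n s := MulAction.mem_orbit_self s
  subset_of_mem ht := orbit_fixing_subset ht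
  antitone _ _ hmn s := orbit_fixing_antitone s hmn
  isOpen_iff := hopen
  pigeonhole n s O hO := by
    obtain ⟨h, hh, hhO⟩ := exists_forall_mul_mem_or_forall_mul_notMem hl n {f | f • s ∈ O}
      fun f hf h hh => by
        rw [mem_ofPred_eq, mul_smul]
        exact hO _ (smul_mem_orbit hf s) _ (smul_mem_orbit hh _)
    refine ⟨h • s, smul_mem_orbit hh s, hhO.imp (fun hall => ?_) fun hnone => ?_⟩
    · rintro _ ⟨⟨f, hf⟩, rfl⟩
      exact (mul_smul f h s).subst (motive := (· ∈ O)) (hall f hf)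
    · refine disjoint_left.2 ?_
      rintro _ ⟨⟨f, hf⟩, rfl⟩
      exact (mul_smul f h s).subst (motive := (· ∉ O)) (hnone f hf)
  fusion Q hQ hdense := exists_forall_ge_orbit_subset hQ hdense

end RigidSurj

/-! ### The action on alternating equivalence relations -/

section MinimalRepresentatives

variable {E : Setoid ℕ} {a b k : ℕ}

theorem exists_mem_minReps (E : Setoid ℕ) (a : ℕ) : ∃ m ∈ minReps E, E.r a m := by
  have hinf : E.r a (sInf {m | E.r a m}) := Nat.sInf_mem (s := {m | E.r a m}) ⟨a, E.refl a⟩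
  exact ⟨sInf {m | E.r a m}, fun _ hy => Nat.sInf_le (E.trans hinf hy), hinf⟩

theorem eq_of_mem_minReps (ha : a ∈ minReps E) (hb : b ∈ minReps E) (hab : E.r a b) : a = b :=
  (ha b hab).antisymm (hb a (E.symm hab))

theorem image_minReps (E : Setoid ℕ) : (fun x => {y | E.r x y}) '' minReps E = classes E := by
  ext C
  refine ⟨fun ⟨x, _, hx⟩ => ⟨x, hx.symm⟩, ?_⟩
  rintro ⟨x, rfl⟩
  obtain ⟨m, hm, hxm⟩ := exists_mem_minReps E x
  exact ⟨m, hm, Set.ext fun y => ⟨E.trans hxm, E.trans (E.symm hxm)⟩⟩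

theorem infinite_classes_iff : (classes E).Infinite ↔ (minReps E).Infinite := by
  rw [← image_minReps, infinite_image_iff]
  intro a ha b hb hab
  exact eq_of_mem_minReps ha hb ((Set.ext_iff.1 hab b).2 (E.refl b))

/-- The number of the class of `a` when the classes are enumerated by their minimal
representatives. -/
noncomputable def classIndex (E : Setoid ℕ) (a : ℕ) : ℕ := sInf {k | E.r a (pRep E k)}

theorem pRep_mem_minReps (hE : (minReps E).Infinite) (k : ℕ) : pRep E k ∈ minReps E :=
  Nat.nth_mem_of_infinite hE k

theorem pRep_strictMono (hE : (minReps E).Infinite) : StrictMono (pRep E) := Nat.nth_strictMono hE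

theorem range_pRep (hE : (minReps E).Infinite) : range (pRep E) = minReps E :=
  Nat.range_nth_of_infinite hE

theorem rel_pRep_classIndex (hE : (minReps E).Infinite) (a : ℕ) :
    E.r a (pRep E (classIndex E a)) := by
  obtain ⟨m, hm, ham⟩ := exists_mem_minReps E a
  obtain ⟨k, rfl⟩ := (range_pRep hE).symm ▸ hm
  exact Nat.sInf_mem (s := {k | E.r a (pRep E k)}) ⟨k, ham⟩

theorem classIndex_eq (hE : (minReps E).Infinite) (hk : E.r a (pRep E k)) : classIndex E a = k :=
  (pRep_strictMono hE).injective <| eq_of_mem_minReps (pRep_mem_minReps hE _)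
    (pRep_mem_minReps hE _) (E.trans (E.symm (rel_pRep_classIndex hE a)) hk)

theorem classIndex_pRep (hE : (minReps E).Infinite) (k : ℕ) : classIndex E (pRep E k) = k :=
  classIndex_eq hE (E.refl _)

theorem pRep_classIndex_le (hE : (minReps E).Infinite) (a : ℕ) : pRep E (classIndex E a) ≤ a :=
  pRep_mem_minReps hE _ a (E.symm (rel_pRep_classIndex hE a))

theorem classIndex_lt (hE : (minReps E).Infinite) (ha : a < pRep E k) : classIndex E a < k :=
  (pRep_strictMono hE).lt_iff_lt.1 ((pRep_classIndex_le hE a).trans_lt ha)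

theorem rel_iff_classIndex_eq (hE : (minReps E).Infinite) :
    E.r a b ↔ classIndex E a = classIndex E b :=
  ⟨fun hab => classIndex_eq hE (E.trans hab (rel_pRep_classIndex hE b)), fun hab =>
    E.trans (rel_pRep_classIndex hE a) (hab ▸ E.symm (rel_pRep_classIndex hE b))⟩

section Ker

variable {φ pos : ℕ → ℕ} (hpos : ∀ k, φ (pos k) = k) (hlt : ∀ {i k}, i < pos k → φ i < k)

include hpos hlt

theorem minReps_ker : minReps (Setoid.ker φ) = range pos := by
  ext x
  constructor
  · intro hx
    refine ⟨φ x, le_antisymm (not_lt.1 fun hxpos => (hlt hxpos).false) ?_⟩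
    exact hx _ (hpos (φ x)).symm
  · rintro ⟨k, rfl⟩ m hm
    exact not_lt.1 fun hmk => (hlt hmk).ne (hm.symm.trans (hpos k))

theorem infinite_minReps_ker : (minReps (Setoid.ker φ)).Infinite := by
  rw [minReps_ker hpos hlt]
  exact infinite_range_of_injective (strictMono_of_rightInverse hpos hlt).injective

theorem pRep_ker : pRep (Setoid.ker φ) = pos := by
  have hinf := infinite_minReps_ker hpos hlt
  refine ((pRep_strictMono hinf).range_inj (strictMono_of_rightInverse hpos hlt)).1 ?_
  rw [range_pRep hinf, minReps_ker hpos hlt]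

theorem classIndex_ker : classIndex (Setoid.ker φ) = φ := by
  refine funext fun a => classIndex_eq (infinite_minReps_ker hpos hlt) ?_
  rw [pRep_ker hpos hlt]
  exact (hpos (φ a)).symm

end Ker

end MinimalRepresentatives

namespace EPalt

variable {l : ℕ} {hl : 0 < l} {P : Fin l → Set ℕ} {E F : EPalt l hl P} {f g : RigidSurj l}
  {m n : ℕ}

theorem infinite_minReps (E : EPalt l hl P) : (minReps E.1).Infinite :=
  infinite_classes_iff.1 E.2.1

theorem ext_classIndex (hEF : classIndex E.1 = classIndex F.1) : E = F :=
  Subtype.ext <| Setoid.ext fun _ _ =>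
    (rel_iff_classIndex_eq (infinite_minReps E)).trans <|
      hEF ▸ (rel_iff_classIndex_eq (infinite_minReps F)).symm

theorem apply_classIndex_pRep (f : RigidSurj l) (E : EPalt l hl P) (k : ℕ) :
    (f ∘ classIndex E.1) ((pRep E.1 ∘ f.pos) k) = k := by
  rw [Function.comp_apply, Function.comp_apply, classIndex_pRep (infinite_minReps E), f.apply_pos]

theorem apply_classIndex_lt (f : RigidSurj l) (E : EPalt l hl P) {i k : ℕ}
    (hi : i < (pRep E.1 ∘ f.pos) k) : (f ∘ classIndex E.1) i < k :=
  RigidSurj.apply_lt (classIndex_lt (infinite_minReps E) hi)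

noncomputable instance : SMul (RigidSurj l) (EPalt l hl P) where
  smul f E := ⟨Setoid.ker (f ∘ classIndex E.1),
    infinite_classes_iff.2
      (infinite_minReps_ker (apply_classIndex_pRep f E) (apply_classIndex_lt f E)),
    fun k => by
      rw [pRep_ker (apply_classIndex_pRep f E) (apply_classIndex_lt f E)]
      have hmod : f.pos k % l = k % l := f.pos_modEq k
      simpa only [hmod, Function.comp_apply] using E.2.2 (f.pos k)⟩

theorem classIndex_smul (f : RigidSurj l) (E : EPalt l hl P) (a : ℕ) :
    classIndex (f • E).1 a = f (classIndex E.1 a) :=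
  congrFun (classIndex_ker (apply_classIndex_pRep f E) (apply_classIndex_lt f E)) a

theorem pRep_smul (f : RigidSurj l) (E : EPalt l hl P) (k : ℕ) :
    pRep (f • E).1 k = pRep E.1 (f.pos k) :=
  congrFun (pRep_ker (apply_classIndex_pRep f E) (apply_classIndex_lt f E)) k

noncomputable instance : MulAction (RigidSurj l) (EPalt l hl P) where
  one_smul E := ext_classIndex (funext fun a => classIndex_smul 1 E a)
  mul_smul f g E := ext_classIndex (funext fun a => by simp only [classIndex_smul, f.mul_apply])

theorem rel_smul_iff {a b : ℕ} :
    (f • E).1.r a b ↔ f (classIndex E.1 a) = f (classIndex E.1 b) := Iff.rfl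

theorem coarsens_smul (f : RigidSurj l) (E : EPalt l hl P) : Coarsens (f • E).1 E.1 :=
  fun _ _ hab => congrArg f ((rel_iff_classIndex_eq (infinite_minReps E)).1 hab)

theorem exists_smul_eq_of_coarsens (hP : Pairwise fun i j => Disjoint (P i) (P j))
    (hFE : Coarsens F.1 E.1) : ∃ f : RigidSurj l, f • E = F := by
  have hE := infinite_minReps E
  have hF := infinite_minReps F
  have hindex : ∀ a, classIndex F.1 (pRep E.1 (classIndex E.1 a)) = classIndex F.1 a := fun a =>
    (rel_iff_classIndex_eq hF).1 (hFE _ _ (E.1.symm (rel_pRep_classIndex hE a)))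
  have hpRep : ∀ k, pRep E.1 (classIndex E.1 (pRep F.1 k)) = pRep F.1 k := fun k =>
    (pRep_classIndex_le hE _).antisymm
      (pRep_mem_minReps hF k _ (hFE _ _ (rel_pRep_classIndex hE _)))
  refine ⟨⟨fun i => classIndex F.1 (pRep E.1 i), fun k => classIndex E.1 (pRep F.1 k),
    fun k => ?_, fun {i k} hi => ?_, fun k => ?_⟩, ext_classIndex (funext fun a => ?_)⟩
  · rw [hindex, classIndex_pRep hF]
  · exact classIndex_lt hF (hpRep k ▸ pRep_strictMono hE hi)
  · by_contra hne
    refine disjoint_left.1 (hP (mt Fin.mk.inj hne)) (hpRep k ▸ E.2.2 _) (F.2.2 k)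
  · exact (classIndex_smul _ _ _).trans (hindex a)

theorem approx_smul_of_mem_fixing (hf : f ∈ RigidSurj.fixing l n) (E : EPalt l hl P) :
    approx n (f • E).1 = approx n E.1 := by
  have hE := infinite_minReps E
  have hpRep : pRep (f • E).1 n = pRep E.1 n := by
    rw [pRep_smul, RigidSurj.pos_eq_of_mem_fixing hf le_rfl]
  ext ⟨a, b⟩
  simp only [approx, hpRep, mem_ofPred_eq]
  refine and_congr_right fun ha => and_congr_right fun hb => ?_
  rw [rel_smul_iff, rel_iff_classIndex_eq hE, hf _ (classIndex_lt hE ha).le,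
    hf _ (classIndex_lt hE hb).le]

theorem approx_trunc_smul (f : RigidSurj l) (n : ℕ) (E : EPalt l hl P) :
    approx n (f.trunc n • E).1 = approx n (f • E).1 := by
  rw [← approx_smul_of_mem_fixing (f.tail_mem_fixing n), ← mul_smul, f.tail_mul_trunc]

theorem pRep_eq_of_approx_eq {E F : Setoid ℕ} (h : approx m E = approx n F) :
    pRep E m = pRep F n := by
  have hdiag : ∀ (k : ℕ) (G : Setoid ℕ) (a : ℕ), (a, a) ∈ approx k G ↔ a < pRep G k :=
    fun k G a => ⟨And.left, fun ha => ⟨ha, ha, G.refl a⟩⟩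
  refine eq_of_forall_lt_iff fun a => ?_
  rw [← hdiag, h, hdiag]

theorem trunc_eq_of_approx_smul_eq (h : approx m (f • E).1 = approx n (g • E).1) :
    f.trunc n = g.trunc n := by
  have hE := infinite_minReps E
  have hpRep := pRep_eq_of_approx_eq h
  have hpos : f.pos m = g.pos n :=
    (pRep_strictMono hE).injective (by rw [← pRep_smul, hpRep, pRep_smul])
  refine RigidSurj.trunc_eq_of_apply_eq_iff hpos fun i hi j hj => ?_
  have hlt : ∀ i < f.pos m, pRep E.1 i < pRep (f • E).1 m := fun i hi =>
    (pRep_strictMono hE hi).trans_eq (pRep_smul f E m).symm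
  have hmem := Set.ext_iff.1 h (pRep E.1 i, pRep E.1 j)
  simpa only [approx, mem_ofPred_eq, ← hpRep, hlt i hi, hlt j hj, true_and, rel_smul_iff,
    classIndex_pRep hE] using hmem

open MulAction RigidSurj

theorem basicSet_approx_smul (hP : Pairwise fun i j => Disjoint (P i) (P j)) (f : RigidSurj l)
    (n : ℕ) (E : EPalt l hl P) :
    basicSet (EPalt l hl P) (approx n (f • E).1) E = orbit (fixing l n) (f.trunc n • E) := by
  refine Subset.antisymm ?_ ?_
  · rintro F ⟨hFE, m, hm⟩
    obtain ⟨g, rfl⟩ := exists_smul_eq_of_coarsens hP hFE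
    rw [← trunc_eq_of_approx_smul_eq hm]
    refine ⟨⟨g.tail n, g.tail_mem_fixing n⟩, ?_⟩
    change g.tail n • g.trunc n • E = g • E
    rw [← mul_smul, tail_mul_trunc]
  · rintro _ ⟨⟨h, hh⟩, rfl⟩
    change h • f.trunc n • E ∈ _
    refine ⟨?_, n, by rw [approx_smul_of_mem_fixing hh, approx_trunc_smul]⟩
    rw [← mul_smul]
    exact coarsens_smul _ E

theorem basicSet_approx (hP : Pairwise fun i j => Disjoint (P i) (P j)) (n : ℕ)
    (E : EPalt l hl P) : basicSet (EPalt l hl P) (approx n E.1) E = orbit (fixing l n) E := by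
  simpa only [one_smul, one_trunc] using basicSet_approx_smul hP 1 n E

theorem forall_basicSet_iff (hP : Pairwise fun i j => Disjoint (P i) (P j))
    (Φ : Set (EPalt l hl P) → Prop) :
    (∀ a B, (basicSet (EPalt l hl P) a B).Nonempty →
      ∃ A ∈ basicSet (EPalt l hl P) a B, Φ (basicSet (EPalt l hl P) a A)) ↔
    ∀ n (E : EPalt l hl P), ∃ A ∈ orbit (fixing l n) E, Φ (orbit (fixing l n) A) := by
  have happrox : ∀ {n} {A E : EPalt l hl P}, A ∈ orbit (fixing l n) E →
      approx n A.1 = approx n E.1 := by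
    rintro n _ E ⟨⟨h, hh⟩, rfl⟩
    exact approx_smul_of_mem_fixing hh E
  constructor
  · intro hΦ n E
    obtain ⟨A, hA, hΦA⟩ := hΦ (approx n E.1) E (basicSet_approx hP n E ▸ nonempty_orbit E)
    rw [basicSet_approx hP] at hA
    rw [← happrox hA, basicSet_approx hP] at hΦA
    exact ⟨A, hA, hΦA⟩
  · rintro hΦ _ B ⟨F, hFB, n, rfl⟩
    obtain ⟨f, rfl⟩ := exists_smul_eq_of_coarsens hP hFB
    obtain ⟨A, hA, hΦA⟩ := hΦ n (f.trunc n • B)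
    refine ⟨A, basicSet_approx_smul hP f n B ▸ hA, ?_⟩
    rwa [← approx_trunc_smul, ← happrox hA, basicSet_approx hP]

theorem isRamsey_iff (hP : Pairwise fun i j => Disjoint (P i) (P j)) (X : Set (EPalt l hl P)) :
    IsRamsey (EPalt l hl P) X ↔ RamseyFor (fun n E => orbit (fixing l n) E) X := by
  simp only [IsRamsey, ← disjoint_iff_inter_eq_empty]
  exact forall_basicSet_iff hP fun U => U ⊆ X ∨ Disjoint U X

theorem isRamseyNull_iff (hP : Pairwise fun i j => Disjoint (P i) (P j))
    (X : Set (EPalt l hl P)) :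
    IsRamseyNull (EPalt l hl P) X ↔ RamseyNullFor (fun n E => orbit (fixing l n) E) X := by
  simp only [IsRamseyNull, ← disjoint_iff_inter_eq_empty]
  exact forall_basicSet_iff hP fun U => Disjoint U X

section Topology

attribute [local instance] ellentuckTop

theorem isOpen_orbit (hP : Pairwise fun i j => Disjoint (P i) (P j)) (n : ℕ)
    (E : EPalt l hl P) : IsOpen (orbit (fixing l n) E) :=
  TopologicalSpace.isOpen_generateFrom_of_mem ⟨_, _, (basicSet_approx hP n E).symm⟩

theorem exists_orbit_subset_of_isOpen {U : Set (EPalt l hl P)} (hU : IsOpen U) (hE : E ∈ U) :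
    ∃ n, orbit (fixing l n) E ⊆ U := by
  induction hU with
  | basic V hV =>
    obtain ⟨a, B, rfl⟩ := hV
    obtain ⟨hEB, n, rfl⟩ := hE
    refine ⟨n, ?_⟩
    rintro _ ⟨⟨h, hh⟩, rfl⟩
    exact ⟨fun a b hab => coarsens_smul h E a b (hEB a b hab), n, approx_smul_of_mem_fixing hh E⟩
  | univ => exact ⟨0, subset_univ _⟩
  | inter V W _ _ ihV ihW =>
    obtain ⟨m, hm⟩ := ihV hE.1
    obtain ⟨n, hn⟩ := ihW hE.2
    exact ⟨max m n, subset_inter ((orbit_fixing_antitone E (le_max_left m n)).trans hm)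
      ((orbit_fixing_antitone E (le_max_right m n)).trans hn)⟩
  | sUnion T _ ih =>
    obtain ⟨V, hVT, hEV⟩ := hE
    exact (ih V hVT hEV).imp fun n hn => hn.trans (subset_sUnion_of_mem hVT)

theorem isEllentuck_orbit (hP : Pairwise fun i j => Disjoint (P i) (P j)) :
    IsEllentuck fun n (E : EPalt l hl P) => orbit (fixing l n) E :=
  isEllentuck hl fun _ => ⟨fun hU _ hE => exists_orbit_subset_of_isOpen hU hE, fun hU =>
    isOpen_iff_forall_mem_open.2 fun E hE =>
      let ⟨n, hn⟩ := hU E hE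
      ⟨_, hn, isOpen_orbit hP n E, mem_orbit_self E⟩⟩

end Topology

end EPalt

theorem EPaltIsTopologicalRamseySpace_general
    (l : ℕ) (hl : 0 < l) (P : Fin l → Set ℕ)
    (hdisj : ∀ i j, i ≠ j → Disjoint (P i) (P j))
    (X : Set ↥(EPalt l hl P)) :
    (HasBP (EPalt l hl P) X ↔ IsRamsey (EPalt l hl P) X) ∧
    (@IsMeagre _ (ellentuckTop (EPalt l hl P)) X ↔ IsRamseyNull (EPalt l hl P) X) := by
  let := ellentuckTop (EPalt l hl P)
  have hB := EPalt.isEllentuck_orbit (hl := hl) hdisj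
  rw [EPalt.isRamsey_iff hdisj, EPalt.isRamseyNull_iff hdisj]
  exact ⟨hB.exists_eq_symmDiff_iff, hB.isMeagre_iff⟩

/-- **Theorem 3.2:** `(𝓔^P_∞, ≤, r)` is a topological Ramsey space: a set
`𝓧 ⊆ 𝓔^P_∞` has the property of Baire with respect to the Ellentuck topology iff it
is Ramsey, and it is Ellentuck-meagre iff it is Ramsey null. -/
theorem EPaltIsTopologicalRamseySpace
    (l : ℕ) (hl : 0 < l) (P : Fin l → Set ℕ)
    (hinf : ∀ i, (P i).Infinite)
    (hdisj : ∀ i j, i ≠ j → Disjoint (P i) (P j))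
    (hcov : ⋃ i, P i = Set.univ)
    (hmin : ∀ i j : Fin l, i < j → sInf (P i) < sInf (P j))
    (X : Set ↥(EPalt l hl P)) :
    (HasBP (EPalt l hl P) X ↔ IsRamsey (EPalt l hl P) X) ∧
    (@IsMeagre _ (ellentuckTop (EPalt l hl P)) X ↔ IsRamseyNull (EPalt l hl P) X) :=
  EPaltIsTopologicalRamseySpace_general l hl P hdisj X

end DualRamsey
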